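/- arXiv:math/0609058 — 6 statements merged into one kernel-verified Lean document; each statement's English description precedes it below -/
import Mathlib

section
/- For every real number ξ, the limit as u → 0⁻ of (1/(2πi)) ∫_{−∞}^{∞} [1/((1+η²)² (ξ + iu − η))] dη exists and equals −i/(4(ξ−i)) − 1/(4(ξ−i)²). -/
open MeasureTheory Complex

lemma aux_top (w : ℂ) (hw : w.im ≠ 0) :
    Filter.Tendsto (fun η : ℝ => Complex.log ((η : ℂ) - w) - (Real.log η : ℂ)) Filter.atTop
      (nhds 0) := by
  have h1 : Filter.Tendsto (fun η : ℝ => 1 - w * ((η⁻¹ : ℝ) : ℂ)) Filter.atTop (nhds 1) := by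
    have h := (Complex.continuous_ofReal.tendsto 0).comp tendsto_inv_atTop_zero
    have h2 := (h.const_mul w).const_sub 1
    simpa using h2
  have h2 := (continuousAt_clog (x := 1) (by simp)).tendsto.comp h1
  rw [Complex.log_one] at h2
  refine h2.congr' ?_
  filter_upwards [Filter.eventually_gt_atTop 0] with η hη
  have hη' : (η : ℂ) ≠ 0 := by exact_mod_cast hη.ne'
  have e : (η : ℂ) - w = (η : ℂ) * (1 - w * ((η⁻¹ : ℝ) : ℂ)) := by
    push_cast; field_simp
  have hne : (η : ℂ) - w ≠ 0 := by
    intro h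
    apply hw
    have := congrArg Complex.im h
    simpa using this
  have hne2 : (1 - w * ((η⁻¹ : ℝ) : ℂ)) ≠ 0 := by
    intro h; rw [h, mul_zero] at e; exact hne e
  rw [e, Complex.log_ofReal_mul hη hne2]
  simp

lemma aux_bot_pos (w : ℂ) (hw : 0 < w.im) :
    Filter.Tendsto (fun η : ℝ => Complex.log ((η : ℂ) - w) - (Real.log η : ℂ)) Filter.atBot
      (nhds (-(Real.pi * I))) := by
  have h := (aux_top (-w) (by simpa using hw.ne')).comp Filter.tendsto_neg_atBot_atTop
  have h2 := h.sub_const (Real.pi * I)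
  rw [zero_sub] at h2
  refine h2.congr fun η => ?_
  have e : (η : ℂ) - w = -(((-η : ℝ) : ℂ) - -w) := by push_cast; ring
  have hi : 0 < (((-η : ℝ) : ℂ) - -w).im := by simpa using hw
  have : Complex.log ((η : ℂ) - w) = Complex.log (((-η : ℝ) : ℂ) - -w) - Real.pi * I := by
    rw [e]
    simp only [Complex.log, norm_neg, Complex.arg_neg_eq_arg_sub_pi_of_im_pos hi]
    push_cast; ring
  rw [this]
  simp only [Function.comp, Real.log_neg_eq_log]
  ring

lemma aux_bot_neg (w : ℂ) (hw : w.im < 0) :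
    Filter.Tendsto (fun η : ℝ => Complex.log ((η : ℂ) - w) - (Real.log η : ℂ)) Filter.atBot
      (nhds (Real.pi * I)) := by
  have h := (aux_top (-w) (by simpa using hw.ne)).comp Filter.tendsto_neg_atBot_atTop
  have h2 := h.add_const (Real.pi * I)
  rw [zero_add] at h2
  refine h2.congr fun η => ?_
  have e : (η : ℂ) - w = -(((-η : ℝ) : ℂ) - -w) := by push_cast; ring
  have hi : (((-η : ℝ) : ℂ) - -w).im < 0 := by simpa using hw
  have : Complex.log ((η : ℂ) - w) = Complex.log (((-η : ℝ) : ℂ) - -w) + Real.pi * I := by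
    rw [e]
    simp only [Complex.log, norm_neg, Complex.arg_neg_eq_arg_add_pi_of_im_neg hi]
    push_cast; ring
  rw [this]
  simp only [Function.comp, Real.log_neg_eq_log]
  ring

lemma aux_ne (w : ℂ) (hw : w.im ≠ 0) (η : ℝ) : (η : ℂ) - w ≠ 0 := by
  intro h
  apply hw
  have := congrArg Complex.im h
  simpa using this

lemma aux_inv (w : ℂ) (l : Filter ℝ) (hl : Filter.Tendsto (fun x : ℝ => |x|) l Filter.atTop) :
    Filter.Tendsto (fun η : ℝ => ((η : ℂ) - w)⁻¹) l (nhds 0) := by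
  apply Filter.tendsto_inv₀_cobounded.comp
  rw [← tendsto_norm_atTop_iff_cobounded]
  refine Filter.tendsto_atTop_mono (f := fun x : ℝ => |x| + -‖w‖) (fun x => ?_)
    (Filter.tendsto_atTop_add_const_right _ _ hl)
  have := norm_sub_norm_le (x : ℂ) w
  rw [Complex.norm_real, Real.norm_eq_abs] at this
  linarith

lemma aux_dlog (w : ℂ) (hw : w.im ≠ 0) (η : ℝ) :
    HasDerivAt (fun η : ℝ => Complex.log ((η : ℂ) - w)) (((η : ℂ) - w)⁻¹) η := by
  have h : HasDerivAt (fun η : ℝ => (η : ℂ) - w) 1 η :=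
    (Complex.ofRealCLM.hasDerivAt (x := η)).sub_const w
  have := h.clog_real (by right; simpa using hw)
  simpa using this

lemma aux_dinv (w : ℂ) (hw : w.im ≠ 0) (η : ℝ) :
    HasDerivAt (fun η : ℝ => ((η : ℂ) - w)⁻¹) (-(((η : ℂ) - w)⁻¹ ^ 2)) η := by
  have h : HasDerivAt (fun η : ℝ => (η : ℂ) - w) 1 η :=
    (Complex.ofRealCLM.hasDerivAt (x := η)).sub_const w
  have := h.fun_inv (aux_ne w hw η)
  refine this.congr_deriv ?_
  rw [inv_pow, neg_div, one_div]

lemma aux_integrable (z : ℂ) (hz : z.im < 0) :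
    Integrable (fun η : ℝ => 1 / ((1 + (η : ℂ) ^ 2) ^ 2 * (z - (η : ℂ)))) := by
  have hp (η : ℝ) : (1 + (η : ℂ) ^ 2) ≠ 0 := by
    have : (1 + η ^ 2 : ℝ) ≠ 0 := by positivity
    exact_mod_cast this
  have hn (η : ℝ) : z - (η : ℂ) ≠ 0 := by
    rw [← neg_sub]; exact neg_ne_zero.2 (aux_ne z hz.ne η)
  refine (integrable_inv_one_add_sq.const_mul (-z.im)⁻¹).mono' ?_ (Filter.Eventually.of_forall ?_)
  · apply Continuous.aestronglyMeasurable
    refine continuous_const.div (by fun_prop) fun η => ?_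
    exact mul_ne_zero (pow_ne_zero _ (hp η)) (hn η)
  · intro η
    have e : ‖(1 + (η : ℂ) ^ 2)‖ = 1 + η ^ 2 := by
      have : (1 + (η : ℂ) ^ 2) = ((1 + η ^ 2 : ℝ) : ℂ) := by push_cast; rfl
      rw [this, Complex.norm_real, Real.norm_eq_abs, abs_of_pos (by positivity)]
    have h1 : -z.im ≤ ‖z - (η : ℂ)‖ := by
      have := Complex.abs_im_le_norm (z - (η : ℂ))
      simp only [Complex.sub_im, Complex.ofReal_im, sub_zero] at this
      exact (neg_le_abs _).trans this
    have h0 : 0 < -z.im := by linarith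
    rw [norm_div, norm_mul, norm_pow, e, norm_one, one_div, ← mul_inv]
    apply inv_anti₀ (by positivity)
    have h2 : (1 + η ^ 2) ≤ (1 + η ^ 2) ^ 2 := by nlinarith [sq_nonneg η]
    rw [mul_comm (-z.im)]
    gcongr

lemma aux_integral (z : ℂ) (hz : z.im < 0) (hz' : -1 < z.im) :
    ∫ η : ℝ, 1 / ((1 + (η : ℂ) ^ 2) ^ 2 * (z - (η : ℂ)))
      = 2 * (Real.pi : ℂ) * I * (-I / (4 * (z - I)) - 1 / (4 * (z - I) ^ 2)) := by
  have hzi : z - I ≠ 0 := by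
    intro h
    have := congrArg Complex.im h
    simp at this; linarith
  have hzi' : z + I ≠ 0 := by
    intro h
    have := congrArg Complex.im h
    simp at this; linarith
  set A : ℂ := -I / (4 * (z - I)) - 1 / (4 * (z - I) ^ 2) with hA
  set C : ℂ := I / (4 * (z + I)) - 1 / (4 * (z + I) ^ 2) with hC
  set B : ℂ := -1 / (4 * (z - I)) with hB
  set D : ℂ := -1 / (4 * (z + I)) with hD
  have hI1 : (I : ℂ).im ≠ 0 := by simp
  have hI2 : (-I : ℂ).im ≠ 0 := by simp
  let F : ℝ → ℂ := fun η =>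
    A * Complex.log ((η : ℂ) - I) + C * Complex.log ((η : ℂ) - -I)
      - (A + C) * Complex.log ((η : ℂ) - z) - B * ((η : ℂ) - I)⁻¹ - D * ((η : ℂ) - -I)⁻¹
  have hF (η : ℝ) : HasDerivAt F (1 / ((1 + (η : ℂ) ^ 2) ^ 2 * (z - (η : ℂ)))) η := by
    have h := (((((aux_dlog I hI1 η).const_mul A).fun_add ((aux_dlog (-I) hI2 η).const_mul C)).fun_sub
      ((aux_dlog z hz.ne η).const_mul (A + C))).fun_sub ((aux_dinv I hI1 η).const_mul B)).fun_sub
      ((aux_dinv (-I) hI2 η).const_mul D)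
    refine HasDerivAt.congr_deriv (f := F) h ?_
    symm
    have n1 := aux_ne I hI1 η
    have n2 := aux_ne (-I) hI2 η
    have n3 := aux_ne z hz.ne η
    rw [sub_neg_eq_add] at n2 ⊢
    have n4 : z - η ≠ 0 := by rw [← neg_sub]; exact neg_ne_zero.2 n3
    have e1 : (1 + (η : ℂ) ^ 2) = (η - I) * (η + I) := by
      ring_nf; rw [I_sq]; ring
    have e3 : ((η : ℂ) - z)⁻¹ = - (z - η)⁻¹ := by rw [← neg_sub, inv_neg]
    have eAC : A + C = 1 / ((z - I) ^ 2 * (z + I) ^ 2) := by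
      rw [hA, hC]
      field_simp
      ring_nf
      simp only [I_sq, I_pow_three, I_pow_four]
      ring_nf
    rw [e1, e3, eAC, hA, hB, hC, hD]
    generalize (η : ℂ) = x at *
    field_simp
    ring_nf
    have p5 : I ^ 5 = I := by rw [pow_succ, I_pow_four, one_mul]
    have p6 : I ^ 6 = -1 := by rw [pow_succ, p5, I_mul_I]
    have p7 : I ^ 7 = -I := by rw [pow_succ, p6]; ring
    have p8 : I ^ 8 = 1 := by rw [pow_succ, p7, neg_mul, I_mul_I]; ring
    simp only [I_sq, I_pow_three, I_pow_four, p5, p6, p7, p8]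
    ring_nf
  have habsT : Filter.Tendsto (fun x : ℝ => |x|) Filter.atTop Filter.atTop :=
    Filter.tendsto_abs_atTop_atTop
  have habsB : Filter.Tendsto (fun x : ℝ => |x|) Filter.atBot Filter.atTop :=
    Filter.tendsto_abs_atBot_atTop
  have hT : Filter.Tendsto F Filter.atTop (nhds 0) := by
    have h := (((((aux_top I hI1).const_mul A).add ((aux_top (-I) hI2).const_mul C)).sub
      ((aux_top z hz.ne).const_mul (A + C))).sub ((aux_inv I _ habsT).const_mul B)).sub
      ((aux_inv (-I) _ habsT).const_mul D)
    simp only [mul_zero, add_zero, sub_zero] at h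
    refine h.congr fun η => ?_
    simp only [F]; ring
  have hBt : Filter.Tendsto F Filter.atBot (nhds (-(2 * (Real.pi : ℂ) * I * A))) := by
    have h := (((((aux_bot_pos I (by simp)).const_mul A).add
      ((aux_bot_neg (-I) (by simp)).const_mul C)).sub
      ((aux_bot_neg z hz).const_mul (A + C))).sub ((aux_inv I _ habsB).const_mul B)).sub
      ((aux_inv (-I) _ habsB).const_mul D)
    have e : A * -(Real.pi * I) + C * (Real.pi * I) - (A + C) * (Real.pi * I) - B * 0 - D * 0
      = (-(2 * (Real.pi : ℂ) * I * A)) := by ring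
    rw [e] at h
    refine h.congr fun η => ?_
    simp only [F]; ring
  rw [integral_of_hasDerivAt_of_tendsto hF (aux_integrable z hz) hBt hT]
  ring

/-- for every real ξ, the limit as u → 0⁻ of
(1/(2πi)) ∫_{-∞}^{∞} dη / ((1+η²)² (ξ + iu − η)) equals
−i/(4(ξ−i)) − 1/(4(ξ−i)²). -/
theorem pi_plus_one_over_one_plus_sq_sq (ξ : ℝ) :
    Filter.Tendsto
      (fun u : ℝ =>
        (1 / (2 * (Real.pi : ℂ) * I)) *
          ∫ η : ℝ, 1 / ((1 + (η : ℂ) ^ 2) ^ 2 * ((ξ : ℂ) + I * (u : ℂ) - (η : ℂ))))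
      (nhdsWithin 0 (Set.Iio 0))
      (nhds (-I / (4 * ((ξ : ℂ) - I)) - 1 / (4 * ((ξ : ℂ) - I) ^ 2))) := by
  have hne : (ξ : ℂ) - I ≠ 0 := aux_ne I (by simp) ξ
  have hc : ContinuousAt (fun u : ℝ => -I / (4 * ((ξ : ℂ) + I * (u : ℂ) - I))
      - 1 / (4 * ((ξ : ℂ) + I * (u : ℂ) - I) ^ 2)) 0 := by
    have h1 : (4 * ((ξ : ℂ) + I * ((0 : ℝ) : ℂ) - I)) ≠ 0 := by simpa using hne
    have h2 : (4 * ((ξ : ℂ) + I * ((0 : ℝ) : ℂ) - I) ^ 2) ≠ 0 := by simpa using hne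
    have c1 : ContinuousAt (fun u : ℝ => -I / (4 * ((ξ : ℂ) + I * (u : ℂ) - I))) 0 :=
      ContinuousAt.div (by fun_prop) (by fun_prop) h1
    have c2 : ContinuousAt (fun u : ℝ => 1 / (4 * ((ξ : ℂ) + I * (u : ℂ) - I) ^ 2)) 0 :=
      ContinuousAt.div (by fun_prop) (by fun_prop) h2
    exact c1.sub c2
  have ht := hc.tendsto.mono_left (nhdsWithin_le_nhds (s := Set.Iio 0))
  simp only [Complex.ofReal_zero, mul_zero, add_zero] at ht
  refine ht.congr' ?_
  have hm : Set.Ioo (-1 : ℝ) 0 ∈ nhdsWithin (0 : ℝ) (Set.Iio 0) :=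
    Ioo_mem_nhdsLT (by norm_num)
  filter_upwards [hm] with u hu
  rw [aux_integral _ (by simpa using hu.2) (by simpa using hu.1)]
  have hpi : (2 * (Real.pi : ℂ) * I) ≠ 0 := by simp [Real.pi_ne_zero]
  rw [← mul_assoc, one_div_mul_cancel hpi, one_mul]
end

section
/- For every real number ξ, the limit as u → 0⁻ of (1/(2πi)) ∫_{−∞}^{∞} [(1−η²)/((1+η²)³ (ξ + iu − η))] dη exists and equals (1/2)[ 1/(4i(ξ−i)) + 1/(8(ξ−i)²) − (3ξ−7i)/(8(ξ−i)³) ]. -/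
open MeasureTheory Complex

lemma aux_pf (c x z : ℂ) (hc : c ≠ 0) (h1 : x - c ≠ 0) (h2 : x + c ≠ 0) (h3 : z - x ≠ 0)
    (h4 : z - c ≠ 0) (h5 : z + c ≠ 0) :
    (-c^2 - x^2) / (((x-c)*(x+c))^3 * (z - x)) =
      (-1/(8*c^3*(z-c)) + 1/(8*c^2*(z-c)^2) - 1/(4*c*(z-c)^3)) * (2*c/((x-c)*(x+c)))
      + (-c^2 - z^2) / ((z-c)*(z+c))^3 * ((z+c)/((x+c)*(z-x)))
      + (1/(8*c^2*(z-c)) - 1/(4*c*(z-c)^2)) / (x-c)^2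
      + (-1/(4*c*(z-c))) / (x-c)^3
      + (1/(8*c^2*(z+c)) + 1/(4*c*(z+c)^2)) / (x+c)^2
      + (1/(4*c*(z+c))) / (x+c)^3 := by
  field_simp
  ring

lemma aux_tend (a : ℂ) (l : Filter ℝ) (hl : l ≤ Filter.cocompact ℝ) :
    Filter.Tendsto (fun x : ℝ => ((x:ℂ) - a)⁻¹) l (nhds 0) := by
  have h : Filter.Tendsto (fun x : ℝ => ‖(x:ℂ) - a‖) l Filter.atTop := by
    have h0 : Filter.Tendsto (fun x : ℝ => ‖x‖ + -‖a‖) l Filter.atTop :=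
      Filter.tendsto_atTop_add_const_right _ _ ((tendsto_norm_cocompact_atTop (E := ℝ)).mono_left hl)
    refine Filter.tendsto_atTop_mono (fun x => ?_) h0
    have := norm_sub_norm_le (x:ℂ) a
    rw [norm_real] at this
    linarith
  rw [tendsto_zero_iff_norm_tendsto_zero]
  simp only [norm_inv]
  exact h.inv_tendsto_atTop

lemma aux_slit (x : ℝ) (z : ℂ) (hz : z.im < 0) : ((x:ℂ) + I) / ((x:ℂ) - z) ∈ slitPlane := by
  have hne : (x:ℂ) - z ≠ 0 := by
    intro h; have := congrArg Complex.im h; simp at this; linarith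
  by_contra hcon
  rw [mem_slitPlane_iff] at hcon
  push Not at hcon
  obtain ⟨hr, hi⟩ := hcon
  have e : (x:ℂ) + I = (((x:ℂ) + I) / ((x:ℂ) - z)) * ((x:ℂ) - z) := by field_simp
  have := congrArg Complex.im e
  rw [Complex.mul_im, hi] at this
  simp only [add_im, ofReal_im, I_im, sub_im] at this
  nlinarith

lemma aux_int (z : ℂ) (hz : z.im < 0) :
    Integrable (fun η : ℝ => (1 - (η : ℂ) ^ 2) / ((1 + (η : ℂ) ^ 2) ^ 3 * (z - (η : ℂ)))) := by
  have hne : ∀ x : ℝ, z - (x:ℂ) ≠ 0 := by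
    intro x h; have := congrArg Complex.im h; simp at this; linarith
  have hp : ∀ x : ℝ, (1:ℂ) + (x:ℂ)^2 ≠ 0 := by
    intro x h
    have : (1:ℝ) + x^2 = 0 := by exact_mod_cast h
    nlinarith
  refine Integrable.mono' (integrable_inv_one_add_sq.const_mul ((-z.im)⁻¹)) ?_ ?_
  · refine (Continuous.div (by fun_prop) (by fun_prop) ?_).aestronglyMeasurable
    intro x
    exact mul_ne_zero (pow_ne_zero _ (hp x)) (hne x)
  · refine Filter.Eventually.of_forall fun x => ?_
    have e1 : ‖(1:ℂ) + (x:ℂ)^2‖ = 1 + x^2 := by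
      have : (1:ℂ) + (x:ℂ)^2 = ((1 + x^2 : ℝ) : ℂ) := by push_cast; ring
      rw [this, norm_real, Real.norm_of_nonneg (by positivity)]
    have e2 : ‖(1:ℂ) - (x:ℂ)^2‖ ≤ 1 + x^2 := by
      have : (1:ℂ) - (x:ℂ)^2 = ((1 - x^2 : ℝ) : ℂ) := by push_cast; ring
      rw [this, norm_real, Real.norm_eq_abs, abs_le]
      constructor <;> nlinarith [sq_nonneg x]
    have e3 : -z.im ≤ ‖z - (x:ℂ)‖ := by
      have := abs_im_le_norm (z - (x:ℂ))
      simp at this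
      linarith [neg_abs_le z.im]
    have hz' : 0 < -z.im := by linarith
    have hn : 0 < ‖z - (x:ℂ)‖ := norm_pos_iff.2 (hne x)
    rw [norm_div, norm_mul, norm_pow, e1, ← mul_inv, ← one_div]
    rw [div_le_div_iff₀ (by positivity) (by positivity), one_mul]
    have hq : (1:ℝ) ≤ 1 + x^2 := by nlinarith [sq_nonneg x]
    calc _ ≤ (1+x^2) * (‖z - (x:ℂ)‖ * (1+x^2)) := by gcongr
      _ = (1+x^2)^2 * ‖z - (x:ℂ)‖ := by ring
      _ ≤ _ := by gcongr <;> norm_num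

lemma aux_main (z : ℂ) (hz : z.im < 0) (hz1 : z + I ≠ 0) :
    ∫ η : ℝ, (1 - (η : ℂ) ^ 2) / ((1 + (η : ℂ) ^ 2) ^ 3 * (z - (η : ℂ))) =
     (2 * (Real.pi : ℂ) * I) * (-1/(8*I^3*(z-I)) + 1/(8*I^2*(z-I)^2) - 1/(4*I*(z-I)^3)) := by
  set A1 : ℂ := -1/(8*I^3*(z-I)) + 1/(8*I^2*(z-I)^2) - 1/(4*I*(z-I)^3) with hA1
  set C : ℂ := (-I^2 - z^2) / ((z-I)*(z+I))^3 with hC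
  set A2 : ℂ := 1/(8*I^2*(z-I)) - 1/(4*I*(z-I)^2) with hA2
  set A3 : ℂ := -1/(4*I*(z-I)) with hA3
  set B2 : ℂ := 1/(8*I^2*(z+I)) + 1/(4*I*(z+I)^2) with hB2
  set B3 : ℂ := 1/(4*I*(z+I)) with hB3
  let G : ℝ → ℂ := fun x => C * Complex.log (((x:ℂ) + I) / ((x:ℂ) - z))
    - A2 * ((x:ℂ) - I)⁻¹ - A3 / 2 * (((x:ℂ) - I)⁻¹)^2
    - B2 * ((x:ℂ) + I)⁻¹ - B3 / 2 * (((x:ℂ) + I)⁻¹)^2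
  let F : ℝ → ℂ := fun x => A1 * (2 * I) * ((Real.arctan x : ℝ) : ℂ) + G x
  have n1 : ∀ x : ℝ, (x:ℂ) - I ≠ 0 := by
    intro x h; have := congrArg Complex.im h; simp at this
  have n2 : ∀ x : ℝ, (x:ℂ) + I ≠ 0 := by
    intro x h; have := congrArg Complex.im h; simp at this
  have n3 : ∀ x : ℝ, (x:ℂ) - z ≠ 0 := by
    intro x h; have := congrArg Complex.im h; simp at this; linarith
  have n4 : z - I ≠ 0 := by
    intro h; have := congrArg Complex.im h; simp at this; linarith
  have hder : ∀ x : ℝ, HasDerivAt F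
      ((1 - (x : ℂ) ^ 2) / ((1 + (x : ℂ) ^ 2) ^ 3 * (z - (x : ℂ)))) x := by
    intro x
    have hx : HasDerivAt (fun x : ℝ => (x:ℂ)) 1 x := ofRealCLM.hasDerivAt
    have d1 := (Real.hasDerivAt_arctan x).ofReal_comp.const_mul (A1 * (2 * I))
    have d2 := (((hx.add_const I).div (hx.sub_const z) (n3 x)).clog_real (aux_slit x z hz)).const_mul C
    have d3 := (hx.sub_const I).fun_inv (n1 x)
    have d4 := (hx.add_const I).fun_inv (n2 x)
    have d := d1.add ((((d2.sub (d3.const_mul A2)).sub ((d3.pow 2).const_mul (A3/2))).sub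
      (d4.const_mul B2)).sub ((d4.pow 2).const_mul (B3/2)))
    refine HasDerivAt.congr_deriv (f := F) d ?_
    have n3' : z - (x:ℂ) ≠ 0 := by rw [← neg_sub]; exact neg_ne_zero.2 (n3 x)
    have e := aux_pf I x z I_ne_zero (n1 x) (n2 x) n3' n4 hz1
    rw [← hA1, ← hA2, ← hA3, ← hB2, ← hB3, ← hC] at e
    have q : ((x:ℂ) - I) * ((x:ℂ)+I) = 1 + (x:ℂ)^2 := by linear_combination -I_sq
    rw [q] at e
    have q0 : (1:ℂ) + (x:ℂ)^2 ≠ 0 := by rw [← q]; exact mul_ne_zero (n1 x) (n2 x)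
    have e' : (-I^2 - (x:ℂ)^2) = 1 - (x:ℂ)^2 := by rw [I_sq]; ring
    rw [e'] at e
    rw [e]
    have t1 : A1 * (2 * I) * (((1 / (1 + x^2) : ℝ)) : ℂ) = A1 * (2 * I / (1 + (x:ℂ)^2)) := by
      push_cast; ring
    have t2 : C * (((1 * ((x:ℂ) - z) - ((x:ℂ) + I) * 1) / ((x:ℂ) - z)^2) / (((x:ℂ)+I)/((x:ℂ) - z)))
       = C * ((z+I)/(((x:ℂ)+I)*(z-(x:ℂ)))) := by
      congr 1
      have := n2 x
      have := n3 x
      have r : z - (x:ℂ) = -((x:ℂ) - z) := by ring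
      rw [r]
      field_simp
      ring
    have m1 := n1 x
    have m2 := n2 x
    simp only [Pi.div_apply] at *
    rw [t1, t2]
    generalize (x:ℂ) - I = s
    generalize (x:ℂ) + I = t
    push_cast
    ring
  have hG : ∀ l : Filter ℝ, l ≤ Filter.cocompact ℝ → Filter.Tendsto G l (nhds 0) := by
    intro l hl
    have s1 := aux_tend I l hl
    have s2 : Filter.Tendsto (fun x : ℝ => ((x:ℂ) + I)⁻¹) l (nhds 0) := by
      simpa using aux_tend (-I) l hl
    have s3 := aux_tend z l hl
    have s4 : Filter.Tendsto (fun x : ℝ => Complex.log (((x:ℂ) + I) / ((x:ℂ) - z))) l (nhds 0) := by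
      have : Filter.Tendsto (fun x : ℝ => ((x:ℂ) + I) / ((x:ℂ) - z)) l (nhds 1) := by
        have := (s3.const_mul (z + I)).const_add 1
        rw [mul_zero, add_zero] at this
        refine this.congr fun x => ?_
        have := n3 x
        field_simp
        ring
      have := this.clog (by simp)
      simpa using this
    have := ((((s4.const_mul C).sub (s1.const_mul A2)).sub ((s1.pow 2).const_mul (A3/2))).sub
      (s2.const_mul B2)).sub ((s2.pow 2).const_mul (B3/2))
    have h0 : C * 0 - A2 * 0 - A3 / 2 * 0 ^ 2 - B2 * 0 - B3 / 2 * 0 ^ 2 = 0 := by ring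
    rw [h0] at this
    exact this
  have hbot : Filter.Tendsto F Filter.atBot (nhds (A1 * (2*I) * ((-(Real.pi/2) : ℝ) : ℂ) + 0)) := by
    refine Filter.Tendsto.add (Filter.Tendsto.const_mul _ ?_) (hG _ atBot_le_cocompact)
    exact (continuous_ofReal.tendsto _).comp (Real.tendsto_arctan_atBot.mono_right nhdsWithin_le_nhds)
  have htop : Filter.Tendsto F Filter.atTop (nhds (A1 * (2*I) * (((Real.pi/2) : ℝ) : ℂ) + 0)) := by
    refine Filter.Tendsto.add (Filter.Tendsto.const_mul _ ?_) (hG _ atTop_le_cocompact)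
    exact (continuous_ofReal.tendsto _).comp (Real.tendsto_arctan_atTop.mono_right nhdsWithin_le_nhds)
  rw [integral_of_hasDerivAt_of_tendsto hder (aux_int z hz) hbot htop]
  push_cast
  ring

/-- for every real ξ, the limit as u → 0⁻ of
(1/(2πi)) ∫_{-∞}^{∞} (1−η²) dη / ((1+η²)³ (ξ + iu − η)) equals
(1/2)[ 1/(4i(ξ−i)) + 1/(8(ξ−i)²) − (3ξ−7i)/(8(ξ−i)³) ]. -/
theorem pi_plus_one_sub_sq_over_one_plus_sq_cube (ξ : ℝ) :
    Filter.Tendsto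
      (fun u : ℝ =>
        (1 / (2 * (Real.pi : ℂ) * I)) *
          ∫ η : ℝ, (1 - (η : ℂ) ^ 2) /
            ((1 + (η : ℂ) ^ 2) ^ 3 * ((ξ : ℂ) + I * (u : ℂ) - (η : ℂ))))
      (nhdsWithin 0 (Set.Iio 0))
      (nhds ((1 / 2) * (1 / (4 * I * ((ξ : ℂ) - I)) + 1 / (8 * ((ξ : ℂ) - I) ^ 2)
        - (3 * (ξ : ℂ) - 7 * I) / (8 * ((ξ : ℂ) - I) ^ 3)))) := by
  have n0 : (ξ:ℂ) - I ≠ 0 := by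
    intro h; have := congrArg Complex.im h; simp at this
  let R : ℂ → ℂ := fun z => -1/(8*I^3*(z-I)) + 1/(8*I^2*(z-I)^2) - 1/(4*I*(z-I)^3)
  have hR : ContinuousAt R (ξ:ℂ) := by
    have hI := I_ne_zero
    have hs : ContinuousAt (fun z : ℂ => z - I) (ξ:ℂ) := by fun_prop
    refine ContinuousAt.sub (ContinuousAt.add ?_ ?_) ?_ <;>
    · refine ContinuousAt.div continuousAt_const (by fun_prop) ?_
      simp [n0]
  have hlim : Filter.Tendsto (fun u : ℝ => R ((ξ:ℂ) + I * (u:ℂ))) (nhdsWithin 0 (Set.Iio 0))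
      (nhds (R ξ)) := by
    refine hR.tendsto.comp (Filter.Tendsto.mono_left ?_ nhdsWithin_le_nhds)
    have : Continuous (fun u : ℝ => (ξ:ℂ) + I * (u:ℂ)) := by fun_prop
    simpa using this.tendsto 0
  have hval : R ξ = ((1 / 2) * (1 / (4 * I * ((ξ : ℂ) - I)) + 1 / (8 * ((ξ : ℂ) - I) ^ 2)
        - (3 * (ξ : ℂ) - 7 * I) / (8 * ((ξ : ℂ) - I) ^ 3))) := by
    have e : 3 * (ξ : ℂ) - 7 * I = 3 * ((ξ:ℂ) - I) - 4 * I := by ring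
    have hI3 : I^3 = -I := by rw [pow_succ, I_sq]; ring
    simp only [R]
    rw [e, hI3, I_sq]
    generalize (ξ:ℂ) - I = t at n0
    have hI := I_ne_zero
    field_simp
    ring_nf
    simp only [I_sq]
    ring
  rw [← hval]
  refine hlim.congr' ?_
  have h1 : Set.Ioo (-1:ℝ) 0 ∈ nhdsWithin (0:ℝ) (Set.Iio 0) := Ioo_mem_nhdsLT (by norm_num)
  filter_upwards [h1] with u hu
  rw [aux_main]
  · have := Real.pi_ne_zero
    have hp : (2 * (Real.pi:ℂ) * I) ≠ 0 := by simp [this]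
    rw [← mul_assoc, one_div_mul_cancel hp, one_mul]
  · simpa using hu.2
  · intro h; have := congrArg Complex.im h; simp at this; linarith [hu.1]
end

section
/- Let A be an associative unital algebra over ℂ and τ : A → ℂ a ℂ-linear functional satisfying τ(xy) = τ(yx) for all x, y ∈ A and τ(1) = 4. Let u, v ∈ A satisfy u² = v² = −1 and uv + vu = 0. Then for every real number ξ, τ( [ iu/(4(ξ−i)) + (u+iv)/(4(ξ−i)²) ] · [ (6ξv + 2u)/(1+ξ²)² − 8ξ²(u + ξv)/(1+ξ²)³ ] ) = −4 · (−2iξ² − ξ + i) / ((ξ−i)⁴(ξ+i)³). -/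
open Complex

/-- trace identity (2.25). -/
theorem trace_identity_2_25 (A : Type*) [Ring A] [Algebra ℂ A]
    (τ : A →ₗ[ℂ] ℂ) (hτ : ∀ x y : A, τ (x * y) = τ (y * x)) (hτ1 : τ 1 = 4)
    (u v : A) (hu : u ^ 2 = -1) (hv : v ^ 2 = -1) (huv : u * v + v * u = 0)
    (ξ : ℝ) :
    τ (((I / (4 * ((ξ : ℂ) - I))) • u
        + (1 / (4 * ((ξ : ℂ) - I) ^ 2)) • (u + I • v)) *
       ((6 * (ξ : ℂ) / (1 + (ξ : ℂ) ^ 2) ^ 2) • v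
        + (2 / (1 + (ξ : ℂ) ^ 2) ^ 2) • u
        - (8 * (ξ : ℂ) ^ 2 / (1 + (ξ : ℂ) ^ 2) ^ 3) • (u + (ξ : ℂ) • v)))
    = -4 * (-2 * I * (ξ : ℂ) ^ 2 - (ξ : ℂ) + I)
        / (((ξ : ℂ) - I) ^ 4 * ((ξ : ℂ) + I) ^ 3) := by
  have huu : τ (u * u) = -4 := by rw [← pow_two, hu, map_neg, hτ1]
  have hvv : τ (v * v) = -4 := by rw [← pow_two, hv, map_neg, hτ1]
  have h0 : τ (u * v) = 0 := by
    have h := congrArg τ huv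
    rw [map_add, map_zero, hτ v u] at h
    linear_combination h / 2
  have h1 : τ (v * u) = 0 := by rw [hτ, h0]
  have hm : (ξ : ℂ) - I ≠ 0 := by
    intro h
    have := congrArg Complex.im h
    simp at this
  have hp : (ξ : ℂ) + I ≠ 0 := by
    intro h
    have := congrArg Complex.im h
    simp at this
  have hI : I ^ 2 = -1 := I_sq
  have hf : 1 + (ξ : ℂ) ^ 2 = ((ξ : ℂ) - I) * ((ξ : ℂ) + I) := by
    linear_combination hI
  simp only [mul_add, add_mul, mul_sub, smul_add, smul_mul_assoc, mul_smul_comm, map_add,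
    map_sub, map_smul, huu, hvv, h0, h1, smul_eq_mul]
  rw [hf]
  generalize (ξ : ℂ) = x at *
  obtain ⟨m, hmx⟩ : ∃ m, m = x - I := ⟨_, rfl⟩
  obtain rfl : x = m + I := by rw [hmx]; ring
  have e : m + I - I = m := by ring
  rw [e] at hm ⊢
  field_simp
  ring_nf
  have h3 : I ^ 3 = -I := by linear_combination I * hI
  have h4 : I ^ 4 = 1 := by linear_combination (I ^ 2 - 1) * hI
  simp only [hI, h3, h4]
  field_simp
  ring
end

section
/- Let A be an associative unital algebra over ℂ and τ : A → ℂ a ℂ-linear functional satisfying τ(xy) = τ(yx) for all x, y ∈ A and τ(1) = 4. Let u, v ∈ A satisfy u² = v² = −1 and uv + vu = 0. Then for every real number ξ and every real number a, τ( [ (u+iv)/(2(ξ−i)²) ] · ia·[ v/(1+ξ²)² − 4ξ(u + ξv)/(1+ξ²)³ ] ) = 2a (i − 3ξ) / ((ξ−i)⁴(ξ+i)³). -/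
open Complex

/-- trace identity (2.30). -/
theorem trace_identity_2_30 (A : Type*) [Ring A] [Algebra ℂ A]
    (τ : A →ₗ[ℂ] ℂ) (hτ : ∀ x y : A, τ (x * y) = τ (y * x)) (hτ1 : τ 1 = 4)
    (u v : A) (hu : u ^ 2 = -1) (hv : v ^ 2 = -1) (huv : u * v + v * u = 0)
    (ξ a : ℝ) :
    τ (((1 / (2 * ((ξ : ℂ) - I) ^ 2)) • (u + I • v)) *
       ((I * (a : ℂ)) • ((1 / (1 + (ξ : ℂ) ^ 2) ^ 2) • v
          - (4 * (ξ : ℂ) / (1 + (ξ : ℂ) ^ 2) ^ 3) • (u + (ξ : ℂ) • v))))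
    = 2 * (a : ℂ) * (I - 3 * (ξ : ℂ))
        / (((ξ : ℂ) - I) ^ 4 * ((ξ : ℂ) + I) ^ 3) := by
  have huu : τ (u * u) = -4 := by rw [← pow_two, hu, map_neg, hτ1]
  have hvv : τ (v * v) = -4 := by rw [← pow_two, hv, map_neg, hτ1]
  have h0 : τ (u * v) = 0 := by
    have h := congrArg τ huv
    rw [map_add, hτ v u, map_zero] at h
    linear_combination h / 2
  have h1 : τ (v * u) = 0 := by rw [hτ v u, h0]
  have hm : (ξ : ℂ) - I ≠ 0 := by
    intro h
    have := congrArg Complex.im h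
    simp at this
  have hp : (ξ : ℂ) + I ≠ 0 := by
    intro h
    have := congrArg Complex.im h
    simp at this
  have hf : 1 + (ξ : ℂ) ^ 2 = ((ξ : ℂ) - I) * ((ξ : ℂ) + I) := by
    linear_combination I_sq
  simp only [smul_mul_assoc, mul_smul_comm, add_mul, mul_add, mul_sub, smul_add, smul_sub,
    map_add, map_sub, map_smul, smul_eq_mul, huu, hvv, h0, h1]
  rw [hf]
  have hI : I ^ 2 = -1 := I_sq
  generalize (ξ : ℂ) = x at *
  generalize (a : ℂ) = b at *
  have key : I * b * (-4 * I * ((x - I) * (x + I)) + 16 * x * (1 + I * x))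
      = 4 * b * (I - 3 * x) * (x - I) := by
    linear_combination (b * (12 * x ^ 2 + 4 * I ^ 2)) * hI
  trans (I * b * (-4 * I * ((x - I) * (x + I)) + 16 * x * (1 + I * x))) /
    (2 * (x - I) ^ 2 * ((x - I) * (x + I)) ^ 3)
  · field_simp
    ring
  · rw [key]
    field_simp
    ring
end

section
/- Let A be an associative unital algebra over ℂ and τ : A → ℂ a ℂ-linear functional satisfying τ(xy) = τ(yx) for all x, y ∈ A and τ(1) = 4. Let u, v ∈ A satisfy u² = v² = −1 and uv + vu = 0. Then for every real number ξ, τ( [ (1/(4i(ξ−i)) + 1/(8(ξ−i)²) − (3ξ−7i)/(8(ξ−i)³)) v + (−1/(8(ξ−i)²) + (3ξ−7i)/(8(ξ−i)³)) iu ] · [ (1/(1+ξ²) − 2ξ²/(1+ξ²)²) v − (2ξ/(1+ξ²)²) u ] ) = (−iξ² − ξ + 4i) / ((ξ−i)³(ξ+i)²). -/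
open Complex

/-- trace identity (2.39). -/
theorem trace_identity_2_39 (A : Type*) [Ring A] [Algebra ℂ A]
    (τ : A →ₗ[ℂ] ℂ) (hτ : ∀ x y : A, τ (x * y) = τ (y * x)) (hτ1 : τ 1 = 4)
    (u v : A) (hu : u ^ 2 = -1) (hv : v ^ 2 = -1) (huv : u * v + v * u = 0)
    (ξ : ℝ) :
    τ (((1 / (4 * I * ((ξ : ℂ) - I)) + 1 / (8 * ((ξ : ℂ) - I) ^ 2)
          - (3 * (ξ : ℂ) - 7 * I) / (8 * ((ξ : ℂ) - I) ^ 3)) • v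
        + ((-1 / (8 * ((ξ : ℂ) - I) ^ 2)
          + (3 * (ξ : ℂ) - 7 * I) / (8 * ((ξ : ℂ) - I) ^ 3)) * I) • u) *
       ((1 / (1 + (ξ : ℂ) ^ 2) - 2 * (ξ : ℂ) ^ 2 / (1 + (ξ : ℂ) ^ 2) ^ 2) • v
        - (2 * (ξ : ℂ) / (1 + (ξ : ℂ) ^ 2) ^ 2) • u))
    = (-I * (ξ : ℂ) ^ 2 - (ξ : ℂ) + 4 * I)
        / (((ξ : ℂ) - I) ^ 3 * ((ξ : ℂ) + I) ^ 2) := by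
  have huu : τ (u * u) = -4 := by rw [← pow_two, hu, map_neg, hτ1]
  have hvv : τ (v * v) = -4 := by rw [← pow_two, hv, map_neg, hτ1]
  have h0 : τ (u * v) = 0 := by
    have h := congrArg τ huv
    rw [map_add, hτ v u, map_zero] at h
    linear_combination h / 2
  have h1 : τ (v * u) = 0 := by rw [hτ, h0]
  have key : ∀ a b c d : ℂ, τ ((a • v + b • u) * (c • v - d • u)) = -4 * (a * c) + 4 * (b * d) := by
    intro a b c d
    simp only [add_mul, mul_sub, smul_mul_assoc, mul_smul_comm, map_add, map_sub, map_smul,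
      huu, hvv, h0, h1, smul_eq_mul]
    ring
  rw [key]
  have hs : (ξ : ℂ) - I ≠ 0 := by
    intro h
    have := congrArg Complex.im h
    simp at this
  have ht : (ξ : ℂ) + I ≠ 0 := by
    intro h
    have := congrArg Complex.im h
    simp at this
  have hI : I ^ 2 = -1 := I_sq
  have hD : 1 + (ξ : ℂ) ^ 2 = ((ξ : ℂ) - I) * ((ξ : ℂ) + I) := by
    linear_combination hI
  have hinv : 1 / (4 * I * ((ξ : ℂ) - I)) = -I / (4 * ((ξ : ℂ) - I)) := by
    have := I_ne_zero
    field_simp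
    linear_combination hI
  have ha : (1 / (4 * I * ((ξ : ℂ) - I)) + 1 / (8 * ((ξ : ℂ) - I) ^ 2)
          - (3 * (ξ : ℂ) - 7 * I) / (8 * ((ξ : ℂ) - I) ^ 3))
      = (-I * ξ ^ 2 - 3 * ξ + 4 * I) / (4 * ((ξ : ℂ) - I) ^ 3) := by
    rw [hinv]
    field_simp
    ring_nf
    simp only [I_sq, I_pow_three]
    ring
  have hb : ((-1 / (8 * ((ξ : ℂ) - I) ^ 2)
          + (3 * (ξ : ℂ) - 7 * I) / (8 * ((ξ : ℂ) - I) ^ 3)) * I)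
      = (I * ξ + 3) / (4 * ((ξ : ℂ) - I) ^ 3) := by
    field_simp
    ring_nf
    simp only [I_sq]
    ring
  have hc : (1 / (1 + (ξ : ℂ) ^ 2) - 2 * (ξ : ℂ) ^ 2 / (1 + (ξ : ℂ) ^ 2) ^ 2)
      = (1 - (ξ : ℂ) ^ 2) / (((ξ : ℂ) - I) * ((ξ : ℂ) + I)) ^ 2 := by
    rw [← hD]
    have : 1 + (ξ : ℂ) ^ 2 ≠ 0 := by rw [hD]; exact mul_ne_zero hs ht
    field_simp
    ring
  rw [ha, hb, hc, hD]
  field_simp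
  ring_nf
  simp only [I_sq, I_pow_three]
  ring
end

section
/- Let A be an associative unital algebra over ℂ and τ : A → ℂ a ℂ-linear functional satisfying τ(xy) = τ(yx) for all x, y ∈ A and τ(1) = 4. Let u, v ∈ A satisfy u² = v² = −1 and uv + vu = 0, let w ∈ A and a ∈ ℝ satisfy τ(uw) = −2a and τ(vw) = 0, and set p₀ = −(3a/4) v. Then for every real number ξ, τ( [ (u+iv)/(2(ξ−i)) ] · [ (1/(1+ξ²)³)( (2ξ−2ξ³) v p₀ v + (1−3ξ²) v p₀ u + (1−3ξ²) u p₀ v − 4ξ u p₀ u + (3ξ²−1) w − 4ξ u v w + 2a u + 2aξ v ) + 6ξ a (u+ξv) v (u+ξv) / (1+ξ²)⁴ ] ) = 3a(iξ² + ξ − 2i) / ((ξ−i)³(ξ+i)³) + 12a i ξ / ((ξ−i)³(ξ+i)⁴). -/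
open Complex

/-- trace identity (2.46). -/
theorem trace_identity_2_46 (A : Type*) [Ring A] [Algebra ℂ A]
    (τ : A →ₗ[ℂ] ℂ) (hτ : ∀ x y : A, τ (x * y) = τ (y * x)) (hτ1 : τ 1 = 4)
    (u v : A) (hu : u ^ 2 = -1) (hv : v ^ 2 = -1) (huv : u * v + v * u = 0)
    (w : A) (a : ℝ) (huw : τ (u * w) = -2 * (a : ℂ)) (hvw : τ (v * w) = 0)
    (p₀ : A) (hp₀ : p₀ = (-(3 * (a : ℂ) / 4)) • v)
    (ξ : ℝ) :
    τ (((1 / (2 * ((ξ : ℂ) - I))) • (u + I • v)) *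
       ((1 / (1 + (ξ : ℂ) ^ 2) ^ 3) •
          ((2 * (ξ : ℂ) - 2 * (ξ : ℂ) ^ 3) • (v * p₀ * v)
            + (1 - 3 * (ξ : ℂ) ^ 2) • (v * p₀ * u)
            + (1 - 3 * (ξ : ℂ) ^ 2) • (u * p₀ * v)
            - (4 * (ξ : ℂ)) • (u * p₀ * u)
            + (3 * (ξ : ℂ) ^ 2 - 1) • w
            - (4 * (ξ : ℂ)) • (u * v * w)
            + (2 * (a : ℂ)) • u
            + (2 * (a : ℂ) * (ξ : ℂ)) • v)
        + (6 * (ξ : ℂ) * (a : ℂ) / (1 + (ξ : ℂ) ^ 2) ^ 4) •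
            ((u + (ξ : ℂ) • v) * v * (u + (ξ : ℂ) • v))))
    = 3 * (a : ℂ) * (I * (ξ : ℂ) ^ 2 + (ξ : ℂ) - 2 * I)
        / (((ξ : ℂ) - I) ^ 3 * ((ξ : ℂ) + I) ^ 3)
      + 12 * (a : ℂ) * I * (ξ : ℂ)
        / (((ξ : ℂ) - I) ^ 3 * ((ξ : ℂ) + I) ^ 4) := by
  have huu : u * u = -1 := by rw [← sq, hu]
  have hvv : v * v = -1 := by rw [← sq, hv]
  have hvu : v * u = -(u * v) := by
    rw [eq_neg_iff_add_eq_zero, add_comm]; exact huv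
  have tuv : τ (u * v) = 0 := by
    have h1 := hτ v u
    rw [hvu, map_neg] at h1
    have h2 : (2 : ℂ) * τ (u * v) = 0 := by linear_combination -h1
    simpa using h2
  have e1 : v * v * v = -v := by rw [hvv]; simp
  have e2 : v * v * u = -u := by rw [hvv]; simp
  have e3 : u * v * v = -u := by rw [mul_assoc, hvv]; simp
  have e4 : u * v * u = v := by rw [mul_assoc, hvu, mul_neg, ← mul_assoc, huu]; simp
  have f1 : u * (u * v * w) = -(v * w) := by
    rw [← mul_assoc, ← mul_assoc, huu]; simp
  have f2 : v * (u * v * w) = u * w := by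
    rw [← mul_assoc, ← mul_assoc, hvu, neg_mul, e3]; simp
  have e5 : (u + (ξ : ℂ) • v) * v * (u + (ξ : ℂ) • v)
      = (1 - (ξ : ℂ) ^ 2) • v + (-2 * (ξ : ℂ)) • u := by
    simp only [add_mul, mul_add, smul_mul_assoc, mul_smul_comm, e1, e2, e3, e4]
    module
  have key : ∀ x y : ℂ, τ ((u + I • v) * (x • u + y • v)) = -4 * (x + I * y) := by
    intro x y
    simp only [add_mul, mul_add, smul_mul_assoc, mul_smul_comm, huu, hvv, hvu, map_add,
      map_smul, map_neg, tuv, hτ1, smul_eq_mul]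
    ring
  have kw : τ ((u + I • v) * w) = -2 * (a : ℂ) := by
    simp only [add_mul, smul_mul_assoc, map_add, map_smul, huw, hvw, smul_eq_mul]
    ring
  have kuvw : τ ((u + I • v) * (u * v * w)) = -2 * (a : ℂ) * I := by
    simp only [add_mul u, smul_mul_assoc I v, f1, f2, map_add, map_smul, map_neg, huw, hvw,
      smul_eq_mul]
    ring
  have hA : ((2 * (ξ : ℂ) - 2 * (ξ : ℂ) ^ 3) • (v * p₀ * v)
            + (1 - 3 * (ξ : ℂ) ^ 2) • (v * p₀ * u)
            + (1 - 3 * (ξ : ℂ) ^ 2) • (u * p₀ * v)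
            - (4 * (ξ : ℂ)) • (u * p₀ * u)
            + (3 * (ξ : ℂ) ^ 2 - 1) • w
            - (4 * (ξ : ℂ)) • (u * v * w)
            + (2 * (a : ℂ)) • u
            + (2 * (a : ℂ) * (ξ : ℂ)) • v)
      = (((a : ℂ) * (7 / 2 - 9 / 2 * (ξ : ℂ) ^ 2)) • u
          + ((a : ℂ) * (13 / 2 * (ξ : ℂ) - 3 / 2 * (ξ : ℂ) ^ 3)) • v)
        + (3 * (ξ : ℂ) ^ 2 - 1) • w + (-(4 * (ξ : ℂ))) • (u * v * w) := by
    subst hp₀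
    simp only [smul_mul_assoc, mul_smul_comm, e1, e2, e3, e4]
    module
  have hB : (1 - (ξ : ℂ) ^ 2) • v + (-2 * (ξ : ℂ)) • u
      = (-2 * (ξ : ℂ)) • u + (1 - (ξ : ℂ) ^ 2) • v := add_comm _ _
  rw [hA, e5, hB, smul_mul_assoc, map_smul, mul_add, map_add, mul_smul_comm, mul_smul_comm,
    map_smul, map_smul, key, mul_add, mul_add, map_add, map_add, key, mul_smul_comm,
    mul_smul_comm, map_smul, map_smul, kw, kuvw]
  simp only [smul_eq_mul]
  have hm : (ξ : ℂ) - I ≠ 0 := by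
    intro h
    have := congrArg Complex.im h
    simp at this
  have hp : (ξ : ℂ) + I ≠ 0 := by
    intro h
    have := congrArg Complex.im h
    simp at this
  have hI : I ^ 2 = -1 := I_sq
  have hf : 1 + (ξ : ℂ) ^ 2 = ((ξ : ℂ) - I) * ((ξ : ℂ) + I) := by linear_combination hI
  have n1 : (a : ℂ) * (7 / 2 - 9 / 2 * (ξ : ℂ) ^ 2) + I * ((a : ℂ) * (13 / 2 * (ξ : ℂ) - 3 / 2 * (ξ : ℂ) ^ 3)) = (-4 : ℂ)⁻¹ * (6 * a * (I * (ξ : ℂ) ^ 2 + ξ - 2 * I) * (ξ - I) + 2 * a * (3 * (ξ : ℂ) ^ 2 - 1) - 8 * a * I * ξ) := by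
    linear_combination (-(3 / 2 : ℂ) * a * (ξ ^ 2 - 2)) * hI
  have n2 : -2 * (ξ : ℂ) + I * (1 - (ξ : ℂ) ^ 2) = -I * (ξ - I) ^ 2 := by
    linear_combination (I - 2 * ξ) * hI
  rw [n1, n2, hf]
  field_simp
  ring
end
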